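/- Assume the primitive set ℬ ⊆ ℕ is taut, let n > 0 and suppose ℬ^(n) ⊆ 𝒜 ⊆ ℬ, where ℬ^(n) := {b ∈ ℬ : every prime factor of b is ≤ n}. Suppose that {r+1, …, r+n} ∩ M_𝒜 = r + I for some r ∈ ℕ and some set I ⊆ {1,…,n}. Then the set of all k ∈ ℕ for which {k+1, …, k+n} ∩ M_ℬ = k + I has strictly positive lower logarithmic density. -/

import Mathlib

open Filter Set Topology MeasureTheory

open scoped Classical

noncomputable section

/-- The set of multiples `M_B ⊆ ℤ` of a set `B ⊆ ℕ`. -/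
def multiplesZ (B : Set ℕ) : Set ℤ := {n : ℤ | ∃ b ∈ B, (b : ℤ) ∣ n}

/-- The `B`-free integers `F_B = ℤ ∖ M_B`. -/
def freeZ (B : Set ℕ) : Set ℤ := (multiplesZ B)ᶜ

/-- The logarithmically weighted averages `(1/log n) ∑_{k=1}^n 1_A(k)/k`. -/
def logWeight (A : Set ℤ) (n : ℕ) : ℝ :=
  (Real.log n)⁻¹ * ∑ k ∈ Finset.Icc 1 n, A.indicator (fun m : ℤ => ((m : ℝ))⁻¹) (k : ℤ)

/-- The lower logarithmic density of a set `A ⊆ ℤ`. -/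
def logDensLow (A : Set ℤ) : ℝ := liminf (logWeight A) atTop

/-- `A ⊆ ℤ` has logarithmic density `d`. -/
def HasLogDensity (A : Set ℤ) (d : ℝ) : Prop := Tendsto (logWeight A) atTop (𝓝 d)

/-- `B` is primitive: no element divides another one. -/
def Primitive (B : Set ℕ) : Prop := ∀ b ∈ B, ∀ b' ∈ B, b ∣ b' → b = b'

/-- `B` is Behrend: its set of multiples has logarithmic density one. -/
def IsBehrend (B : Set ℕ) : Prop := logDensLow (multiplesZ B) = 1

/-- `B` is taut: removing any element strictly decreases the logarithmic density
of the set of multiples. -/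
def IsTaut (B : Set ℕ) : Prop :=
  ∀ b ∈ B, logDensLow (multiplesZ (B \ {b})) < logDensLow (multiplesZ B)

/-- `B̃^(N)`: the elements of `B` having no prime factor `≤ N`. -/
def Btilde (B : Set ℕ) (N : ℕ) : Set ℕ := {b ∈ B | ∀ p : ℕ, p.Prime → p ∣ b → N < p}

/-- `B^(N)`: the elements of `B` all of whose prime factors are `≤ N`. -/
def Bsmooth (B : Set ℕ) (N : ℕ) : Set ℕ := {b ∈ B | ∀ p : ℕ, p.Prime → p ∣ b → p ≤ N}

/-!
Choose `L` so that every `k ≡ r [ZMOD L]` reproduces the multiples in the block of `A` at `r`. If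
some `b ∈ B` creates a further multiple in the block at such a `k`, then no prime dividing
`a = b / gcd b L` divides `L`. Hence, if moreover `k` is divisible by all primes `p ≤ T` not
dividing `L`, then `a` has no prime factor `≤ T`, and it is a cofactor of one of the finitely many
divisors `c` of `L`, in the sense that `c * a ∈ B`.

By a zero–one law, the density of the multiples of those cofactors of `c` that have no prime factor
`≤ T` either tends to `0` as `T → ∞` or is `1` for every `T`, and in the latter case removing an
element `c * a₀` from `B` would cost no density. As `B` is taut, the density tends to `0`.

The conditions on `k` define a residue class modulo some `Q` whose prime factors are all `≤ T`. By
the Davenport–Erdős theorem relative to this class, for large `T` the bad `k` make up a proportion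
less than `1` of it.
-/

/-! ### Mertens' upper bound for the Euler product -/

lemma prime_pow_div_dvd_factorial {p : ℕ} (hp : p.Prime) (N : ℕ) :
    p ^ (N / p) ∣ N.factorial := by
  refine dvd_trans ?_ (Nat.factorial_dvd_factorial (Nat.mul_div_le N p))
  rw [hp.pow_dvd_iff_le_factorization (Nat.factorial_ne_zero _),
    Nat.factorization_factorial_mul hp]
  exact Nat.le_add_left _ _

lemma prod_primesLE_pow_div_le (N : ℕ) : ∏ p ∈ Nat.primesLE N, p ^ (N / p) ≤ N ^ N := by
  refine (Nat.le_of_dvd N.factorial_pos ?_).trans N.factorial_le_pow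
  refine Finset.prod_dvd_of_isRelPrime (fun p hp q hq hpq ↦ ?_) fun p hp ↦
    prime_pow_div_dvd_factorial (Nat.mem_primesLE.1 hp).2 N
  exact Nat.coprime_iff_isRelPrime.1 <| .pow _ _ <|
    (Nat.coprime_primes (Nat.mem_primesLE.1 hp).2 (Nat.mem_primesLE.1 hq).2).2 hpq

lemma sum_primesLE_div_mul_log_le (N : ℕ) :
    ∑ p ∈ Nat.primesLE N, ((N / p : ℕ) : ℝ) * Real.log p ≤ N * Real.log N := by
  have hpos : 0 < ∏ p ∈ Nat.primesLE N, p ^ (N / p) :=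
    Finset.prod_pos fun p hp ↦ pow_pos (Nat.mem_primesLE.1 hp).2.pos _
  have hlog := Real.log_le_log (Nat.cast_pos.2 hpos)
    (Nat.cast_le (α := ℝ).2 (prod_primesLE_pow_div_le N))
  push_cast at hlog
  rw [Real.log_prod fun p hp ↦ pow_ne_zero _ (Nat.cast_ne_zero.2 (Nat.mem_primesLE.1 hp).2.ne_zero),
    Real.log_pow] at hlog
  simpa only [Real.log_pow] using hlog

lemma sum_primesLE_log_div_le {N : ℕ} (hN : N ≠ 0) :
    ∑ p ∈ Nat.primesLE N, Real.log p / p ≤ Real.log N + Real.log 4 := by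
  have hN' : (0 : ℝ) < N := Nat.cast_pos.2 (Nat.pos_of_ne_zero hN)
  refine le_of_mul_le_mul_left ?_ hN'
  calc (N : ℝ) * ∑ p ∈ Nat.primesLE N, Real.log p / p
      = ∑ p ∈ Nat.primesLE N, (N / p : ℝ) * Real.log p := by
        rw [Finset.mul_sum]
        exact Finset.sum_congr rfl fun p _ ↦ by ring
    _ ≤ ∑ p ∈ Nat.primesLE N, (((N / p : ℕ) : ℝ) + 1) * Real.log p := by
        refine Finset.sum_le_sum fun p _ ↦
          mul_le_mul_of_nonneg_right ?_ (Real.log_natCast_nonneg p)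
        rw [← Nat.floor_div_eq_div (K := ℝ)]
        exact (Nat.lt_floor_add_one _).le
    _ = ∑ p ∈ Nat.primesLE N, ((N / p : ℕ) : ℝ) * Real.log p + Chebyshev.theta N := by
        rw [Chebyshev.theta_eq_sum_primesLE_log, ← Finset.sum_add_distrib]
        exact Finset.sum_congr rfl fun p _ ↦ by ring
    _ ≤ N * Real.log N + Real.log 4 * N :=
        add_le_add (sum_primesLE_div_mul_log_le N) (Chebyshev.theta_le_log4_mul_x hN'.le)
    _ = N * (Real.log N + Real.log 4) := by ring

/-- `m ↦ m ^ (-s)` as a multiplicative map, the form in which Euler products consume it. -/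
def rpowNegHom (s : ℝ) : ℕ →* ℝ where
  toFun m := (m : ℝ) ^ (-s)
  map_one' := by simp
  map_mul' a b := by
    push_cast
    exact Real.mul_rpow a.cast_nonneg b.cast_nonneg

lemma rpow_neg_lt_one_of_prime {s : ℝ} (hs : 0 < s) {p : ℕ} (hp : p.Prime) :
    (p : ℝ) ^ (-s) < 1 :=
  Real.rpow_lt_one_of_one_lt_of_neg (Nat.one_lt_cast.2 hp.one_lt) (neg_neg_of_pos hs)

lemma hasSum_smoothNumbers_rpow {s : ℝ} (hs : 0 < s) (N : ℕ) :
    HasSum (fun m : (N + 1).smoothNumbers ↦ (m : ℝ) ^ (-s))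
      (∏ p ∈ Nat.primesLE N, (1 - (p : ℝ) ^ (-s))⁻¹) :=
  (EulerProduct.summable_and_hasSum_smoothNumbers_prod_primesBelow_geometric
    (f := rpowNegHom s) (fun {p} hp ↦ by
      change ‖(p : ℝ) ^ (-s)‖ < 1
      rw [Real.norm_of_nonneg (Real.rpow_nonneg p.cast_nonneg _)]
      exact rpow_neg_lt_one_of_prime hs hp) (N + 1)).2

lemma prod_primesLE_le_tsum_rpow {s : ℝ} (hs : 1 < s) (N : ℕ) :
    ∏ p ∈ Nat.primesLE N, (1 - (p : ℝ) ^ (-s))⁻¹ ≤ ∑' m : ℕ, 1 / (m : ℝ) ^ s := by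
  have hsum := Real.summable_one_div_nat_rpow.2 hs
  simp only [one_div, ← Real.rpow_neg (Nat.cast_nonneg _)] at hsum ⊢
  rw [← (hasSum_smoothNumbers_rpow (one_pos.trans hs) N).tsum_eq]
  exact hsum.tsum_subtype_le _ _ fun m ↦ Real.rpow_nonneg m.cast_nonneg _

/-- The Euler product `∏_{p ≤ N} (1 - 1/p)⁻¹`, which is the sum of `1/m` over the `m` all of whose
prime factors are at most `N`. -/
def eulerProd (N : ℕ) : ℝ := ∏ p ∈ Nat.primesLE N, (1 - (p : ℝ)⁻¹)⁻¹

lemma inv_one_sub_inv_le {p : ℕ} (hp : p.Prime) {u : ℝ} (hu : 0 < u) :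
    (1 - (p : ℝ)⁻¹)⁻¹ ≤
      (1 - (p : ℝ) ^ (-(1 + u)))⁻¹ * Real.exp (2 * u * (Real.log p / p)) := by
  have hp0 : (0 : ℝ) < p := Nat.cast_pos.2 hp.pos
  have hp2 : (p : ℝ)⁻¹ ≤ 2⁻¹ := inv_anti₀ two_pos (Nat.ofNat_le_cast.2 hp.two_le)
  have hx : 0 ≤ u * Real.log p := mul_nonneg hu.le (Real.log_natCast_nonneg p)
  have hrpow : (p : ℝ) ^ (-(1 + u)) = (p : ℝ)⁻¹ * Real.exp (-(u * Real.log p)) := by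
    rw [neg_add, Real.rpow_add hp0, Real.rpow_neg_one, Real.rpow_def_of_pos hp0]
    ring_nf
  have hfactor : 1 - (p : ℝ) ^ (-(1 + u)) ≤
      (1 - (p : ℝ)⁻¹) * (1 + 2 * u * (Real.log p / p)) := by
    have hexp : (p : ℝ)⁻¹ * (1 - u * Real.log p) ≤ (p : ℝ)⁻¹ * Real.exp (-(u * Real.log p)) := by
      gcongr
      linarith [Real.add_one_le_exp (-(u * Real.log p))]
    have hrest : 0 ≤ (1 - 2 * (p : ℝ)⁻¹) * (u * Real.log p * (p : ℝ)⁻¹) :=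
      mul_nonneg (by linarith) (mul_nonneg hx (by positivity))
    rw [hrpow, div_eq_mul_inv]
    linear_combination hexp + hrest
  have hpos : 0 < 1 - (p : ℝ) ^ (-(1 + u)) :=
    sub_pos.2 (rpow_neg_lt_one_of_prime (by linarith) hp)
  rw [inv_mul_eq_div, le_div_iff₀ hpos, inv_mul_le_iff₀ (by linarith)]
  refine hfactor.trans (mul_le_mul_of_nonneg_left ?_ (by linarith))
  linarith [Real.add_one_le_exp (2 * u * (Real.log p / p))]

lemma eulerProd_nonneg (N : ℕ) : 0 ≤ eulerProd N :=
  Finset.prod_nonneg fun _ _ ↦ inv_nonneg.2 (sub_nonneg.2 (Nat.cast_inv_le_one _))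

lemma eulerProd_le_tsum_mul_exp {u : ℝ} (hu : 0 < u) {N : ℕ} (hN : N ≠ 0) :
    eulerProd N ≤
      (∑' m : ℕ, 1 / (m : ℝ) ^ (1 + u)) * Real.exp (2 * u * (Real.log N + Real.log 4)) := by
  have htsum := prod_primesLE_le_tsum_rpow (s := 1 + u) (by linarith) N
  calc eulerProd N
      ≤ ∏ p ∈ Nat.primesLE N,
          ((1 - (p : ℝ) ^ (-(1 + u)))⁻¹ * Real.exp (2 * u * (Real.log p / p))) :=
        Finset.prod_le_prod (fun _ _ ↦ inv_nonneg.2 (sub_nonneg.2 (Nat.cast_inv_le_one _)))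
          fun p hp ↦ inv_one_sub_inv_le (Nat.mem_primesLE.1 hp).2 hu
    _ = (∏ p ∈ Nat.primesLE N, (1 - (p : ℝ) ^ (-(1 + u)))⁻¹) *
          Real.exp (2 * u * ∑ p ∈ Nat.primesLE N, Real.log p / p) := by
        rw [Finset.prod_mul_distrib, ← Real.exp_sum, Finset.mul_sum]
    _ ≤ _ := by
        gcongr
        exact sum_primesLE_log_div_le hN

lemma tendsto_log_natCast_atTop : Tendsto (fun x : ℕ ↦ Real.log x) atTop atTop :=
  Real.tendsto_log_atTop.comp tendsto_natCast_atTop_atTop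

-- Comparing with `ζ(1 + u)` at `u = 1 / log N` costs only a bounded factor.
lemma exists_eulerProd_le_mul_log :
    ∃ C > 0, ∀ᶠ N : ℕ in atTop, eulerProd N ≤ C * Real.log N := by
  refine ⟨2 * Real.exp (2 + 2 * Real.log 4), by positivity, ?_⟩
  have hu : Tendsto (fun N : ℕ ↦ 1 + (Real.log N)⁻¹) atTop (𝓝[>] 1) := by
    refine tendsto_nhdsWithin_iff.2
      ⟨by simpa using (tendsto_inv_atTop_zero.comp tendsto_log_natCast_atTop).const_add 1, ?_⟩
    filter_upwards [tendsto_log_natCast_atTop.eventually_gt_atTop 0] with N hN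
    exact lt_add_of_pos_right 1 (inv_pos.2 hN)
  filter_upwards [hu.eventually (tendsto_sub_mul_tsum_nat_rpow.eventually_le_const one_lt_two),
    tendsto_log_natCast_atTop.eventually_ge_atTop 1, eventually_ne_atTop 0] with N hzeta hlog hN
  have hlog0 : 0 < Real.log N := one_pos.trans_le hlog
  rw [add_sub_cancel_left, inv_mul_le_iff₀ hlog0] at hzeta
  calc eulerProd N
      ≤ _ := eulerProd_le_tsum_mul_exp (inv_pos.2 hlog0) hN
    _ ≤ (Real.log N * 2) * Real.exp (2 + 2 * Real.log 4) := by
        have hexp : 2 * (Real.log N)⁻¹ * (Real.log N + Real.log 4) ≤ 2 + 2 * Real.log 4 := by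
          rw [mul_assoc, mul_add, inv_mul_cancel₀ hlog0.ne']
          have := mul_le_of_le_one_left (Real.log_nonneg (by norm_num : (1 : ℝ) ≤ 4))
            (inv_le_one_of_one_le₀ hlog)
          linarith
        gcongr
    _ = _ := by ring

/-! ### Logarithmic densities -/

/-- The sum `∑_{k=1}^x 1_S(k)/k`, whose quotient by `log x` is `logWeight S x`. -/
def logSum (S : Set ℤ) (x : ℕ) : ℝ :=
  ∑ k ∈ Finset.Icc 1 x, S.indicator (fun m : ℤ ↦ (m : ℝ)⁻¹) (k : ℤ)

lemma logWeight_eq_inv_log_mul_logSum (S : Set ℤ) (x : ℕ) :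
    logWeight S x = (Real.log x)⁻¹ * logSum S x :=
  rfl

lemma logSum_eq_sum_indicator_one_mul (S : Set ℤ) (x : ℕ) :
    logSum S x = ∑ k ∈ Finset.Icc 1 x, S.indicator (1 : ℤ → ℝ) k * (k : ℝ)⁻¹ := by
  refine Finset.sum_congr rfl fun k _ ↦ ?_
  by_cases hk : (k : ℤ) ∈ S <;> simp [hk]

lemma logSum_eq_sum_filter (S : Set ℤ) (x : ℕ) :
    logSum S x = ∑ k ∈ Finset.Icc 1 x with ((k : ℕ) : ℤ) ∈ S, (k : ℝ)⁻¹ := by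
  rw [logSum, Finset.sum_filter]
  exact Finset.sum_congr rfl fun k _ ↦ by simp only [Set.indicator_apply, Int.cast_natCast]

lemma logSum_succ (S : Set ℤ) (x : ℕ) :
    logSum S (x + 1) = logSum S x + S.indicator (1 : ℤ → ℝ) (x + 1) * (x + 1 : ℝ)⁻¹ := by
  simp only [logSum_eq_sum_indicator_one_mul]
  rw [Finset.sum_Icc_succ_top (Nat.le_add_left 1 x)]
  push_cast
  rfl

lemma logSum_mono {S S' : Set ℤ} {x : ℕ}
    (h : ∀ k ∈ Finset.Icc 1 x, (k : ℤ) ∈ S → (k : ℤ) ∈ S') : logSum S x ≤ logSum S' x := by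
  simp only [logSum_eq_sum_filter]
  refine Finset.sum_le_sum_of_subset_of_nonneg (fun k hk ↦ ?_) fun k _ _ ↦ by positivity
  rw [Finset.mem_filter] at hk ⊢
  exact ⟨hk.1, h k hk.1 hk.2⟩

lemma logSum_nonneg (S : Set ℤ) (x : ℕ) : 0 ≤ logSum S x := by
  rw [logSum_eq_sum_filter]
  positivity

lemma logSum_diff {S T : Set ℤ} (hTS : T ⊆ S) (x : ℕ) :
    logSum (S \ T) x = logSum S x - logSum T x := by
  simp only [logSum, Set.indicator_sdiff hTS, Pi.sub_apply, Finset.sum_sub_distrib]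

lemma logSum_eq_sum_of_indicator {ι : Type*} {s : Finset ι} {c : ι → ℝ} {U : ι → Set ℤ}
    {S : Set ℤ}
    (h : ∀ m : ℤ, S.indicator (1 : ℤ → ℝ) m = ∑ t ∈ s, c t * (U t).indicator (1 : ℤ → ℝ) m)
    (x : ℕ) : logSum S x = ∑ t ∈ s, c t * logSum (U t) x := by
  simp only [logSum_eq_sum_indicator_one_mul, h, Finset.sum_mul, Finset.mul_sum, mul_assoc]
  exact Finset.sum_comm

lemma logSum_le_add_sum {ι : Type*} {s : Finset ι} {S G : Set ℤ} {U : ι → Set ℤ}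
    (h : ∀ k : ℕ, (k : ℤ) ∈ S → (k : ℤ) ∈ G ∨ ∃ t ∈ s, (k : ℤ) ∈ U t) (x : ℕ) :
    logSum S x ≤ logSum G x + ∑ t ∈ s, logSum (U t) x := by
  simp only [logSum]
  rw [Finset.sum_comm, ← Finset.sum_add_distrib]
  have hnonneg (V : Set ℤ) (k : ℕ) : 0 ≤ V.indicator (fun m : ℤ ↦ (m : ℝ)⁻¹) (k : ℤ) :=
    Set.indicator_apply_nonneg fun _ ↦ by positivity
  refine Finset.sum_le_sum fun k _ ↦ Set.indicator_apply_le' (fun hk ↦ ?_) fun _ ↦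
    add_nonneg (hnonneg G k) (Finset.sum_nonneg fun t _ ↦ hnonneg (U t) k)
  rcases h k hk with hG | ⟨t, hts, htk⟩
  · rw [Set.indicator_of_mem hG]
    exact le_add_of_nonneg_right (Finset.sum_nonneg fun t _ ↦ hnonneg (U t) k)
  · refine le_add_of_nonneg_of_le (hnonneg G k) ?_
    rw [← Set.indicator_of_mem htk fun m : ℤ ↦ (m : ℝ)⁻¹]
    exact Finset.single_le_sum (fun t _ ↦ hnonneg (U t) k) hts

lemma logWeight_mono {S S' : Set ℤ} (h : ∀ k : ℕ, (k : ℤ) ∈ S → (k : ℤ) ∈ S') (x : ℕ) :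
    logWeight S x ≤ logWeight S' x :=
  mul_le_mul_of_nonneg_left (logSum_mono fun k _ ↦ h k)
    (inv_nonneg.2 (Real.log_natCast_nonneg x))

lemma logWeight_nonneg (S : Set ℤ) (x : ℕ) : 0 ≤ logWeight S x :=
  mul_nonneg (inv_nonneg.2 (Real.log_natCast_nonneg x)) (logSum_nonneg S x)

lemma hasLogDensity_univ : HasLogDensity univ 1 := by
  have hlim := ((tendsto_inv_atTop_zero.comp tendsto_log_natCast_atTop).mul
    Real.tendsto_harmonic_sub_log).const_add 1
  rw [zero_mul, add_zero] at hlim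
  refine hlim.congr' ?_
  filter_upwards [tendsto_log_natCast_atTop.eventually_ne_atTop 0] with x hx
  have hharmonic : logSum univ x = harmonic x := by
    simp [logSum, harmonic_eq_sum_Icc]
  rw [logWeight_eq_inv_log_mul_logSum, hharmonic, Function.comp_apply, mul_sub,
    inv_mul_cancel₀ hx]
  ring

lemma isCoboundedUnder_ge_logWeight (S : Set ℤ) :
    IsCoboundedUnder (· ≥ ·) atTop (logWeight S) :=
  (hasLogDensity_univ.isBoundedUnder_le.mono_le
    (Eventually.of_forall <| logWeight_mono fun _ _ ↦ mem_univ _)).isCoboundedUnder_ge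

namespace HasLogDensity

variable {S T : Set ℤ} {d e : ℝ}

lemma logDensLow_eq (hS : HasLogDensity S d) : logDensLow S = d :=
  hS.liminf_eq

lemma nonneg (hS : HasLogDensity S d) : 0 ≤ d :=
  ge_of_tendsto' hS (logWeight_nonneg S)

lemma diff (hS : HasLogDensity S d) (hT : HasLogDensity T e) (hTS : T ⊆ S) :
    HasLogDensity (S \ T) (d - e) := by
  refine (hS.sub hT).congr fun x ↦ ?_
  simp only [logWeight_eq_inv_log_mul_logSum, logSum_diff hTS, mul_sub]

lemma of_indicator_eq_sum {ι : Type*} {s : Finset ι} {c u : ι → ℝ} {U : ι → Set ℤ}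
    (hU : ∀ t ∈ s, HasLogDensity (U t) (u t))
    (h : ∀ m : ℤ, S.indicator (1 : ℤ → ℝ) m = ∑ t ∈ s, c t * (U t).indicator (1 : ℤ → ℝ) m) :
    HasLogDensity S (∑ t ∈ s, c t * u t) := by
  refine (tendsto_finsetSum s fun t ht ↦ (hU t ht).const_mul (c t)).congr fun x ↦ ?_
  simp only [logWeight_eq_inv_log_mul_logSum, logSum_eq_sum_of_indicator h, Finset.mul_sum,
    mul_left_comm]

lemma of_forall_approx (h : ∀ ε > 0, ∃ S' d', HasLogDensity S' d' ∧ |d' - d| ≤ ε ∧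
    ∀ᶠ x in atTop, |logWeight S x - logWeight S' x| ≤ ε) : HasLogDensity S d := by
  refine Metric.tendsto_nhds.2 fun ε hε ↦ ?_
  obtain ⟨S', d', hS', hd, hx⟩ := h (ε / 3) (by positivity)
  filter_upwards [hx, Metric.tendsto_nhds.1 hS' (ε / 3) (by positivity)] with x hx hx'
  rw [Real.dist_eq] at hx' ⊢
  calc |logWeight S x - d|
      ≤ |logWeight S x - logWeight S' x| + |logWeight S' x - d| := abs_sub_le _ _ _
    _ ≤ |logWeight S x - logWeight S' x| + (|logWeight S' x - d'| + |d' - d|) := by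
        gcongr
        exact abs_sub_le _ _ _
    _ < ε := by linarith

lemma sub_sum_le_logDensLow {ι : Type*} {s : Finset ι} {U : ι → Set ℤ} {u : ι → ℝ}
    (hS : HasLogDensity S d) (hU : ∀ t ∈ s, HasLogDensity (U t) (u t)) {G : Set ℤ}
    (h : ∀ k : ℕ, (k : ℤ) ∈ S → (k : ℤ) ∈ G ∨ ∃ t ∈ s, (k : ℤ) ∈ U t) :
    d - ∑ t ∈ s, u t ≤ logDensLow G := by
  have hlim := hS.sub (tendsto_finsetSum s hU)
  rw [← hlim.liminf_eq]
  refine liminf_le_liminf (Eventually.of_forall fun x ↦ ?_) hlim.isBoundedUnder_ge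
    (isCoboundedUnder_ge_logWeight G)
  simp only [logWeight_eq_inv_log_mul_logSum]
  rw [sub_le_iff_le_add, ← Finset.mul_sum, ← mul_add]
  exact mul_le_mul_of_nonneg_left (logSum_le_add_sum h x)
    (inv_nonneg.2 (Real.log_natCast_nonneg x))

end HasLogDensity

-- Summation by parts: the difference is `∑ 1_S(k+1) (1/k - 1/(k+1))` up to boundary terms.
lemma abs_logSum_shift_sub_le (S : Set ℤ) (x : ℕ) :
    |logSum {k | k + 1 ∈ S} x - logSum S x| ≤ 1 := by
  let a (m : ℤ) : ℝ := S.indicator 1 m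
  have ha0 (m : ℤ) : 0 ≤ a m := Set.indicator_apply_nonneg fun _ ↦ zero_le_one
  have ha1 (m : ℤ) : a m ≤ 1 := Set.indicator_apply_le' (fun _ ↦ le_rfl) fun _ ↦ zero_le_one
  have key : -1 ≤ logSum {k | k + 1 ∈ S} x - logSum S x - a (x + 1) * (x + 1 : ℝ)⁻¹ ∧
      logSum {k | k + 1 ∈ S} x - logSum S x - a (x + 1) * (x + 1 : ℝ)⁻¹
        ≤ 1 - (x + 1 : ℝ)⁻¹ := by
    induction x with
    | zero => simpa [logSum] using ⟨ha1 1, ha0 1⟩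
    | succ x ih =>
      have hshift : ({k | k + 1 ∈ S} : Set ℤ).indicator (1 : ℤ → ℝ) (x + 1) = a (x + 1 + 1) := rfl
      have hstep : (0 : ℝ) ≤ (x + 1 : ℝ)⁻¹ - (x + 1 + 1 : ℝ)⁻¹ :=
        sub_nonneg.2 (inv_anti₀ (by positivity) (by linarith))
      rw [logSum_succ, logSum_succ, hshift]
      push_cast
      have h0 := mul_nonneg (ha0 (x + 1 + 1)) hstep
      have h1 := mul_le_of_le_one_left hstep (ha1 (x + 1 + 1))
      constructor <;> linarith
  have h0 : 0 ≤ a (x + 1) * (x + 1 : ℝ)⁻¹ := mul_nonneg (ha0 _) (by positivity)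
  have h1 : a (x + 1) * (x + 1 : ℝ)⁻¹ ≤ (x + 1 : ℝ)⁻¹ :=
    mul_le_of_le_one_left (by positivity) (ha1 _)
  exact abs_le.2 ⟨by linarith, by linarith⟩

lemma tendsto_logWeight_shift_one_sub (S : Set ℤ) :
    Tendsto (fun x ↦ logWeight {k | k + 1 ∈ S} x - logWeight S x) atTop (𝓝 0) := by
  have hlim : Tendsto (fun x : ℕ ↦ (Real.log x)⁻¹) atTop (𝓝 0) :=
    tendsto_inv_atTop_zero.comp tendsto_log_natCast_atTop
  refine squeeze_zero_norm (fun x ↦ ?_) hlim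
  rw [logWeight_eq_inv_log_mul_logSum, logWeight_eq_inv_log_mul_logSum, ← mul_sub, norm_mul,
    Real.norm_of_nonneg (inv_nonneg.2 (Real.log_natCast_nonneg x))]
  exact mul_le_of_le_one_right (inv_nonneg.2 (Real.log_natCast_nonneg x))
    (abs_logSum_shift_sub_le S x)

lemma tendsto_logWeight_shift_sub (S : Set ℤ) (i : ℕ) :
    Tendsto (fun x ↦ logWeight {k | k + i ∈ S} x - logWeight S x) atTop (𝓝 0) := by
  induction i with
  | zero => simp
  | succ i ih =>
    have hset : {k : ℤ | k + (i + 1 : ℕ) ∈ S} = {k | k + 1 ∈ {k : ℤ | k + i ∈ S}} := by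
      ext k
      simp only [mem_ofPred_eq, Nat.cast_add_one, add_assoc, add_comm (1 : ℤ)]
    rw [hset, ← add_zero (0 : ℝ)]
    exact ((tendsto_logWeight_shift_one_sub _).add ih).congr fun x ↦ by ring

lemma HasLogDensity.shift {S : Set ℤ} {d : ℝ} (hS : HasLogDensity S d) (i : ℕ) :
    HasLogDensity {k | k + i ∈ S} d := by
  rw [HasLogDensity, ← zero_add d]
  exact ((tendsto_logWeight_shift_sub S i).add hS).congr fun x ↦ by ring

lemma sum_range_indicator_modEq {q : ℕ} (hq : q ≠ 0) (a m : ℤ) :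
    ∑ i ∈ Finset.range q,
      ({k | k + i ≡ a [ZMOD q]} : Set ℤ).indicator (1 : ℤ → ℝ) m = 1 := by
  obtain ⟨j, hjq, hj⟩ := Int.existsUnique_equiv_nat (a - m) (Nat.cast_pos.2 (Nat.pos_of_ne_zero hq))
  have hiff (i : ℕ) : m + i ≡ a [ZMOD q] ↔ i ≡ j [MOD q] := by
    rw [← Int.natCast_modEq_iff, ← sub_add_cancel a m, add_comm m]
    exact ⟨fun h ↦ (Int.ModEq.add_right_cancel' m h).trans hj.symm,
      fun h ↦ (h.trans hj).add_right m⟩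
  rw [Finset.sum_eq_single_of_mem j (Finset.mem_range.2 (Nat.cast_lt.1 hjq))]
  · exact Set.indicator_of_mem (s := {k : ℤ | k + j ≡ a [ZMOD q]}) ((hiff j).2 rfl) _
  · exact fun i hi hij ↦ Set.indicator_of_notMem (s := {k : ℤ | k + i ≡ a [ZMOD q]}) (fun h ↦ hij <|
      ((hiff i).1 h).eq_of_lt_of_lt (Finset.mem_range.1 hi) (Nat.cast_lt.1 hjq)) _

lemma hasLogDensity_setOf_modEq {q : ℕ} (hq : q ≠ 0) (a : ℤ) :
    HasLogDensity {k | k ≡ a [ZMOD q]} (q : ℝ)⁻¹ := by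
  set S : Set ℤ := {k | k ≡ a [ZMOD q]}
  have huniv (x : ℕ) : logWeight univ x =
      ∑ i ∈ Finset.range q, logWeight {k | k + (i : ℕ) ∈ S} x := by
    have hsum := logSum_eq_sum_of_indicator (S := univ) (s := Finset.range q) (c := 1)
      (U := fun i ↦ {k | k + i ∈ S})
      (fun m ↦ by
        simp only [Pi.one_apply, one_mul, Set.indicator_univ]
        exact (sum_range_indicator_modEq hq a m).symm) x
    simp only [logWeight_eq_inv_log_mul_logSum, hsum, Finset.mul_sum, Pi.one_apply, one_mul]
  have hlim := (hasLogDensity_univ.sub (tendsto_finsetSum (Finset.range q) fun i _ ↦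
    tendsto_logWeight_shift_sub S i)).const_mul (q : ℝ)⁻¹
  rw [Finset.sum_const_zero, sub_zero, mul_one] at hlim
  refine hlim.congr fun x ↦ ?_
  rw [huniv, ← Finset.sum_sub_distrib]
  simp only [sub_sub_cancel, Finset.sum_const, Finset.card_range, nsmul_eq_mul]
  exact inv_mul_cancel_left₀ (Nat.cast_ne_zero.2 hq) _

lemma logSum_image_mul_left_le {c : ℕ} (hc : c ≠ 0) (S : Set ℤ) (x : ℕ) :
    logSum ((fun k ↦ (c : ℤ) * k) '' S) x ≤ logSum S x := by
  have hc1 : 1 ≤ c := Nat.one_le_iff_ne_zero.2 hc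
  simp only [logSum_eq_sum_filter]
  calc ∑ k ∈ Finset.Icc 1 x with ((k : ℕ) : ℤ) ∈ (fun k ↦ (c : ℤ) * k) '' S, (k : ℝ)⁻¹
      ≤ ∑ k ∈ {k ∈ Finset.Icc 1 x | ((k : ℕ) : ℤ) ∈ S}.image (c * ·), (k : ℝ)⁻¹ := by
        refine Finset.sum_le_sum_of_subset_of_nonneg (fun k hk ↦ ?_) fun k _ _ ↦ by positivity
        obtain ⟨hkx, j, hjS, hjk⟩ := Finset.mem_filter.1 hk
        rw [Finset.mem_Icc] at hkx
        change (c : ℤ) * j = k at hjk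
        have hj0 : 0 < j := by
          refine pos_of_mul_pos_right (a := (c : ℤ)) ?_ c.cast_nonneg
          exact hjk ▸ Nat.cast_pos (α := ℤ).2 hkx.1
        lift j to ℕ using hj0.le
        have hjk' : c * j = k := by exact_mod_cast hjk
        refine Finset.mem_image.2 ⟨j, Finset.mem_filter.2 ⟨Finset.mem_Icc.2 ⟨?_, ?_⟩, hjS⟩, hjk'⟩
        · exact_mod_cast hj0
        · exact (Nat.le_mul_of_pos_left j hc1).trans (hjk' ▸ hkx.2)
    _ = ∑ j ∈ Finset.Icc 1 x with ((j : ℕ) : ℤ) ∈ S, ((c * j : ℕ) : ℝ)⁻¹ :=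
        Finset.sum_image fun i _ j _ h ↦ Nat.eq_of_mul_eq_mul_left hc1 h
    _ ≤ _ := by
        refine Finset.sum_le_sum fun j hj ↦ inv_anti₀ ?_ ?_
        · exact Nat.cast_pos.2 (Finset.mem_Icc.1 (Finset.mem_filter.1 hj).1).1
        · exact Nat.cast_le.2 (Nat.le_mul_of_pos_left j hc1)

lemma HasLogDensity.image_mul_left {S : Set ℤ} (hS : HasLogDensity S 0) {c : ℕ} (hc : c ≠ 0) :
    HasLogDensity ((fun k ↦ (c : ℤ) * k) '' S) 0 :=
  squeeze_zero (logWeight_nonneg _) (fun x ↦ mul_le_mul_of_nonneg_left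
    (logSum_image_mul_left_le hc S x) (inv_nonneg.2 (Real.log_natCast_nonneg x))) hS

/-! ### The sieve of Eratosthenes–Legendre -/

/-- The proportion of integers divisible by no element of the finite set `F`, as computed by
inclusion–exclusion. -/
def sieveDensity (F : Finset ℕ) : ℝ :=
  ∑ s ∈ F.powerset, (-1) ^ s.card * ((s.lcm id : ℕ) : ℝ)⁻¹

lemma mem_multiplesZ_singleton {q : ℕ} {m : ℤ} : m ∈ multiplesZ {q} ↔ (q : ℤ) ∣ m :=
  exists_eq_left

lemma mem_multiplesZ_lcm {s : Finset ℕ} {m : ℤ} :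
    m ∈ multiplesZ {s.lcm id} ↔ ∀ b ∈ s, (b : ℤ) ∣ m := by
  simp only [mem_multiplesZ_singleton, Int.natCast_dvd, Finset.lcm_dvd_iff, id]

lemma mem_freeZ {B : Set ℕ} {m : ℤ} : m ∈ freeZ B ↔ ∀ b ∈ B, ¬ (b : ℤ) ∣ m := by
  simp only [freeZ, multiplesZ, mem_compl_iff, mem_ofPred_eq, not_exists, not_and]

lemma indicator_freeZ_eq_sum_powerset (F : Finset ℕ) (m : ℤ) :
    (freeZ F).indicator (1 : ℤ → ℝ) m =
      ∑ s ∈ F.powerset, (-1) ^ s.card * (multiplesZ {s.lcm id}).indicator (1 : ℤ → ℝ) m := by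
  have hprod (s : Finset ℕ) : (multiplesZ {s.lcm id}).indicator (1 : ℤ → ℝ) m =
      ∏ b ∈ s, if (b : ℤ) ∣ m then 1 else 0 := by
    rw [Finset.prod_ite_zero, Finset.prod_const_one, Set.indicator_apply]
    simp only [mem_multiplesZ_lcm, Pi.one_apply]
  have hfree : (freeZ F).indicator (1 : ℤ → ℝ) m =
      ∏ b ∈ F, (1 + -if (b : ℤ) ∣ m then (1 : ℝ) else 0) := by
    have hterm (b : ℕ) : (1 + -if (b : ℤ) ∣ m then (1 : ℝ) else 0) =
        if ¬ (b : ℤ) ∣ m then 1 else 0 := by split_ifs <;> norm_num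
    simp only [hterm]
    rw [Finset.prod_ite_zero, Finset.prod_const_one, Set.indicator_apply]
    simp only [mem_freeZ, Finset.mem_coe, Pi.one_apply]
  rw [hfree, Finset.prod_one_add]
  exact Finset.sum_congr rfl fun s _ ↦ by rw [Finset.prod_neg, hprod]

lemma HasLogDensity.inter_freeZ {C : Set ℤ} {c : ℝ} {F : Finset ℕ}
    (h : ∀ s ⊆ F, HasLogDensity (C ∩ multiplesZ {s.lcm id}) (c * ((s.lcm id : ℕ) : ℝ)⁻¹)) :
    HasLogDensity (C ∩ freeZ F) (c * sieveDensity F) := by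
  have hd : c * sieveDensity F =
      ∑ s ∈ F.powerset, (-1) ^ s.card * (c * ((s.lcm id : ℕ) : ℝ)⁻¹) := by
    simp only [sieveDensity, Finset.mul_sum, mul_left_comm]
  rw [hd]
  refine .of_indicator_eq_sum (fun s hs ↦ h s (Finset.mem_powerset.1 hs)) fun m ↦ ?_
  simp only [Set.inter_indicator_one, Pi.mul_apply, indicator_freeZ_eq_sum_powerset,
    Finset.mul_sum, mul_left_comm]

lemma exists_modEq_and_dvd {Q q : ℕ} (hcop : Q.Coprime q) (a : ℤ) :
    ∃ a' : ℤ, a' ≡ a [ZMOD Q] ∧ (q : ℤ) ∣ a' := by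
  obtain ⟨u, v, huv⟩ := Nat.isCoprime_iff_coprime.2 hcop
  refine ⟨v * q * a, (Int.modEq_iff_dvd.2 ⟨u * a, ?_⟩), Dvd.intro_left (v * a) (by ring)⟩
  linear_combination -a * huv

lemma hasLogDensity_modEq_inter_multiplesZ {Q q : ℕ} (hQ : Q ≠ 0) (hq : q ≠ 0)
    (hcop : Q.Coprime q) (a : ℤ) :
    HasLogDensity ({k | k ≡ a [ZMOD Q]} ∩ multiplesZ {q}) ((Q : ℝ)⁻¹ * (q : ℝ)⁻¹) := by
  obtain ⟨a', ha', hqa'⟩ := exists_modEq_and_dvd hcop a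
  have hset : {k : ℤ | k ≡ a [ZMOD Q]} ∩ multiplesZ {q} =
      {k | k ≡ a' [ZMOD (Q * q : ℕ)]} := by
    ext k
    rw [mem_inter_iff, mem_multiplesZ_singleton, mem_ofPred_eq, mem_ofPred_eq, Nat.cast_mul,
      ← Int.modEq_and_modEq_iff_modEq_mul (by simpa using hcop)]
    refine and_congr ⟨fun h ↦ h.trans ha'.symm, fun h ↦ h.trans ha'⟩ ?_
    rw [← Int.modEq_zero_iff_dvd]
    have hq0 : a' ≡ 0 [ZMOD q] := Int.modEq_zero_iff_dvd.2 hqa'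
    exact ⟨fun h ↦ h.trans hq0.symm, fun h ↦ h.trans hq0⟩
  rw [hset, ← mul_inv, ← Nat.cast_mul]
  exact hasLogDensity_setOf_modEq (mul_ne_zero hQ hq) a'

lemma lcm_ne_zero_of_zero_notMem {s : Finset ℕ} (hs : 0 ∉ s) : s.lcm id ≠ 0 := by
  rw [Ne, Finset.lcm_eq_zero_iff]
  simpa using hs

lemma coprime_lcm_right {Q : ℕ} {s : Finset ℕ} (hcop : ∀ b ∈ s, Q.Coprime b) :
    Q.Coprime (s.lcm id) :=
  (Nat.Coprime.prod_right hcop).of_dvd_right (s.lcm_dvd_prod id)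

lemma hasLogDensity_modEq_inter_freeZ_finset {Q : ℕ} (hQ : Q ≠ 0) {F : Finset ℕ} (hF : 0 ∉ F)
    (hcop : ∀ b ∈ F, Q.Coprime b) (a : ℤ) :
    HasLogDensity ({k | k ≡ a [ZMOD Q]} ∩ freeZ F) ((Q : ℝ)⁻¹ * sieveDensity F) :=
  .inter_freeZ fun _ hs ↦ hasLogDensity_modEq_inter_multiplesZ hQ
    (lcm_ne_zero_of_zero_notMem fun h0 ↦ hF (hs h0)) (coprime_lcm_right fun b hb ↦ hcop b (hs hb)) a

lemma sieveDensity_nonneg {F : Finset ℕ} (hF : 0 ∉ F) : 0 ≤ sieveDensity F := by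
  simpa using (hasLogDensity_modEq_inter_freeZ_finset one_ne_zero hF
    (fun b _ ↦ b.coprime_one_left) 0).nonneg

/-- The weight `1/m` on those `m` all of whose prime factors are at most `N`. Divisibility by
distinct primes is independent for this weight, and it dominates `1/m` on `m ≤ N`. -/
def smoothWeight (N m : ℕ) : ℝ := ((N + 1).smoothNumbers).indicator (fun m ↦ (m : ℝ)⁻¹) m

lemma smoothWeight_nonneg (N m : ℕ) : 0 ≤ smoothWeight N m :=
  Set.indicator_apply_nonneg fun _ ↦ by positivity

lemma smoothWeight_of_le {N m : ℕ} (hm : m ≠ 0) (hmN : m ≤ N) :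
    smoothWeight N m = (m : ℝ)⁻¹ :=
  Set.indicator_of_mem
    (Nat.mem_smoothNumbers_of_lt (Nat.pos_of_ne_zero hm) (Nat.lt_succ_of_le hmN)) _

lemma smoothWeight_mul {N q : ℕ} (hq : q ∈ (N + 1).smoothNumbers) (m : ℕ) :
    smoothWeight N (q * m) = smoothWeight N m * (q : ℝ)⁻¹ := by
  by_cases hm : m ∈ (N + 1).smoothNumbers
  · simp [smoothWeight, hm, Nat.mul_mem_smoothNumbers hq hm]
  · have hqm : q * m ∉ (N + 1).smoothNumbers := fun h ↦
      hm (Nat.mem_smoothNumbers_of_dvd h (Nat.dvd_mul_left m q))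
    simp [smoothWeight, hm, hqm]

lemma hasSum_smoothWeight (N : ℕ) : HasSum (smoothWeight N) (eulerProd N) := by
  have h := hasSum_smoothNumbers_rpow one_pos N
  simp only [Real.rpow_neg_one] at h
  exact hasSum_subtype_iff_indicator.1 h

lemma hasSum_smoothWeight_multiplesZ {N q : ℕ} (hq : q ∈ (N + 1).smoothNumbers) :
    HasSum (fun m : ℕ ↦ (multiplesZ {q}).indicator (1 : ℤ → ℝ) m * smoothWeight N m)
      (eulerProd N * (q : ℝ)⁻¹) := by
  have hinj : Function.Injective (q * ·) :=
    mul_right_injective₀ (Nat.ne_zero_of_mem_smoothNumbers hq)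
  refine (hinj.hasSum_iff fun m hm ↦ ?_).1 ?_
  · rw [Set.indicator_of_notMem, zero_mul]
    rw [mem_multiplesZ_singleton, Int.natCast_dvd_natCast]
    exact fun ⟨j, hj⟩ ↦ hm ⟨j, hj.symm⟩
  · refine ((hasSum_smoothWeight N).mul_right (q : ℝ)⁻¹).congr_fun fun j ↦ ?_
    rw [Function.comp_apply, smoothWeight_mul hq, Set.indicator_of_mem, Pi.one_apply, one_mul]
    exact mem_multiplesZ_singleton.2 (Int.natCast_dvd_natCast.2 (Nat.dvd_mul_right q j))

lemma lcm_mem_smoothNumbers {n : ℕ} {s : Finset ℕ} (hs : ∀ b ∈ s, b ∈ n.smoothNumbers) :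
    s.lcm id ∈ n.smoothNumbers := by
  refine Nat.mem_smoothNumbers'.2 fun p hp hps ↦ ?_
  obtain ⟨b, hb, hpb⟩ := (hp.prime.dvd_finsetProd_iff _).1 (hps.trans (s.lcm_dvd_prod id))
  exact Nat.mem_smoothNumbers'.1 (hs b hb) p hp hpb

lemma hasSum_smoothWeight_freeZ {N : ℕ} {F : Finset ℕ} (hF : ∀ b ∈ F, b ∈ (N + 1).smoothNumbers) :
    HasSum (fun m : ℕ ↦ (freeZ F).indicator (1 : ℤ → ℝ) m * smoothWeight N m)
      (eulerProd N * sieveDensity F) := by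
  have h := hasSum_sum fun s hs ↦ (hasSum_smoothWeight_multiplesZ
    (lcm_mem_smoothNumbers fun b hb ↦ hF b (Finset.mem_powerset.1 hs hb))).mul_left
      ((-1 : ℝ) ^ s.card)
  simpa only [indicator_freeZ_eq_sum_powerset, sieveDensity, Finset.sum_mul, Finset.mul_sum,
    mul_assoc, mul_left_comm] using h

/-- The logarithmic density of `freeZ B` when `0 ∉ B` (see `hasLogDensity_freeZ`), encoded as the
infimum of the densities of `freeZ F` over the finite subsets `F` of `B`. -/
def freeDensity (B : Set ℕ) : ℝ := ⨅ F : {F : Finset ℕ // (F : Set ℕ) ⊆ B}, sieveDensity F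

/-! ### The Davenport–Erdős theorem -/

lemma freeDensity_le_sieveDensity {B : Set ℕ} (hB : 0 ∉ B) {F : Finset ℕ} (hF : (F : Set ℕ) ⊆ B) :
    freeDensity B ≤ sieveDensity F :=
  ciInf_le ⟨0, forall_mem_range.2 fun F' ↦ sieveDensity_nonneg fun h0 ↦ hB (F'.2 h0)⟩
    (⟨F, hF⟩ : {F : Finset ℕ // (F : Set ℕ) ⊆ B})

lemma le_freeDensity {B : Set ℕ} {c : ℝ}
    (h : ∀ F : Finset ℕ, (F : Set ℕ) ⊆ B → c ≤ sieveDensity F) : c ≤ freeDensity B :=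
  haveI : Nonempty {F : Finset ℕ // (F : Set ℕ) ⊆ B} := ⟨∅, by simp⟩
  le_ciInf fun F ↦ h F F.2

lemma exists_sieveDensity_lt {B : Set ℕ} {c : ℝ} (h : freeDensity B < c) :
    ∃ F : Finset ℕ, (F : Set ℕ) ⊆ B ∧ sieveDensity F < c := by
  contrapose! h
  exact le_freeDensity h

lemma freeDensity_anti {A B : Set ℕ} (hB : 0 ∉ B) (hAB : A ⊆ B) : freeDensity B ≤ freeDensity A :=
  le_freeDensity fun _ hF ↦ freeDensity_le_sieveDensity hB (hF.trans hAB)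

lemma freeZ_anti {A B : Set ℕ} (hAB : A ⊆ B) : freeZ B ⊆ freeZ A :=
  fun _ hm ↦ mem_freeZ.2 fun b hb ↦ mem_freeZ.1 hm b (hAB hb)

lemma logSum_freeZ_diff_le {N : ℕ} {F F' : Finset ℕ} (hFF' : F ⊆ F')
    (hF' : ∀ b ∈ F', b ∈ (N + 1).smoothNumbers) :
    logSum (freeZ F \ freeZ F') N ≤ eulerProd N * (sieveDensity F - sieveDensity F') := by
  have hsub : freeZ F' ⊆ freeZ F := freeZ_anti (Finset.coe_subset.2 hFF')
  have hsum : HasSum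
      (fun k : ℕ ↦ (freeZ F \ freeZ F').indicator (1 : ℤ → ℝ) k * smoothWeight N k)
      (eulerProd N * (sieveDensity F - sieveDensity F')) := by
    simpa only [Set.indicator_sdiff hsub, Pi.sub_apply, sub_mul, mul_sub] using
      (hasSum_smoothWeight_freeZ fun b hb ↦ hF' b (hFF' hb)).sub (hasSum_smoothWeight_freeZ hF')
  rw [logSum_eq_sum_indicator_one_mul]
  calc _ = ∑ k ∈ Finset.Icc 1 N,
        (freeZ F \ freeZ F').indicator (1 : ℤ → ℝ) k * smoothWeight N k :=
        Finset.sum_congr rfl fun k hk ↦ by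
          rw [Finset.mem_Icc] at hk
          rw [smoothWeight_of_le (Nat.ne_zero_of_lt hk.1) hk.2]
    _ ≤ _ := sum_le_hasSum _ (fun k _ ↦ mul_nonneg
        (Set.indicator_apply_nonneg fun _ ↦ zero_le_one) (smoothWeight_nonneg N k)) hsum

lemma eventually_logSum_freeZ_diff_le {B : Set ℕ} (hB : 0 ∉ B) {F : Finset ℕ}
    (hF : (F : Set ℕ) ⊆ B) : ∀ᶠ N in atTop,
      logSum (freeZ F \ freeZ B) N ≤ eulerProd N * (sieveDensity F - freeDensity B) := by
  filter_upwards [eventually_ge_atTop (F.sup id)] with N hN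
  set F' : Finset ℕ := F ∪ {b ∈ Finset.Icc 1 N | b ∈ B}
  have hF'B : (F' : Set ℕ) ⊆ B := by
    intro b hb
    rcases Finset.mem_union.1 hb with hbF | hbN
    · exact hF hbF
    · exact (Finset.mem_filter.1 hbN).2
  have hF'N (b : ℕ) (hb : b ∈ F') : b ≤ N := by
    rcases Finset.mem_union.1 hb with hbF | hbN
    · exact (Finset.le_sup (f := id) hbF).trans hN
    · exact (Finset.mem_Icc.1 (Finset.mem_filter.1 hbN).1).2
  have hsmooth (b : ℕ) (hb : b ∈ F') : b ∈ (N + 1).smoothNumbers :=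
    Nat.mem_smoothNumbers_of_lt (Nat.pos_of_ne_zero fun h0 ↦ hB (hF'B (h0 ▸ hb)))
      (Nat.lt_succ_of_le (hF'N b hb))
  calc logSum (freeZ F \ freeZ B) N ≤ logSum (freeZ F \ freeZ F') N := by
        refine logSum_mono fun k hk ⟨hkF, hkB⟩ ↦
          ⟨hkF, fun hkF' ↦ hkB <| mem_freeZ.2 fun b hb hbk ↦ ?_⟩
        refine mem_freeZ.1 hkF' b (Finset.mem_union_right _ ?_) hbk
        rw [Finset.mem_Icc] at hk
        have hbk' : b ∣ k := Int.natCast_dvd_natCast.1 hbk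
        exact Finset.mem_filter.2 ⟨Finset.mem_Icc.2 ⟨Nat.pos_of_dvd_of_pos hbk' hk.1,
          (Nat.le_of_dvd hk.1 hbk').trans hk.2⟩, hb⟩
    _ ≤ eulerProd N * (sieveDensity F - sieveDensity F') :=
        logSum_freeZ_diff_le Finset.subset_union_left hsmooth
    _ ≤ _ := mul_le_mul_of_nonneg_left
        (sub_le_sub_left (freeDensity_le_sieveDensity hB hF'B) _) (eulerProd_nonneg N)

lemma abs_logWeight_inter_freeZ_sub_le {B : Set ℕ} {F : Finset ℕ} (hF : (F : Set ℕ) ⊆ B)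
    (C : Set ℤ) (x : ℕ) :
    |logWeight (C ∩ freeZ B) x - logWeight (C ∩ freeZ F) x| ≤ logWeight (freeZ F \ freeZ B) x := by
  have hsub : C ∩ freeZ B ⊆ C ∩ freeZ F := inter_subset_inter_right C (freeZ_anti hF)
  have hdiff : logWeight (C ∩ freeZ F) x - logWeight (C ∩ freeZ B) x =
      logWeight ((C ∩ freeZ F) \ (C ∩ freeZ B)) x := by
    simp only [logWeight_eq_inv_log_mul_logSum, logSum_diff hsub, mul_sub]
  rw [abs_sub_comm, hdiff, abs_of_nonneg (logWeight_nonneg _ x)]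
  refine logWeight_mono (fun k hk ↦ ?_) x
  exact ⟨hk.1.2, fun hkB ↦ hk.2 ⟨hk.1.1, hkB⟩⟩

-- The tail up to `x` is at most its smooth weight, whose total mass `eulerProd x` is `O(log x)`.
lemma exists_eventually_logWeight_freeZ_diff_le {B : Set ℕ} (hB : 0 ∉ B) {ε : ℝ} (hε : 0 < ε) :
    ∃ F : Finset ℕ, (F : Set ℕ) ⊆ B ∧ sieveDensity F ≤ freeDensity B + ε ∧
      ∀ᶠ x in atTop, logWeight (freeZ F \ freeZ B) x ≤ ε := by
  obtain ⟨C, hC, hMertens⟩ := exists_eulerProd_le_mul_log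
  have hδ : 0 < min ε (ε / C) := by positivity
  obtain ⟨F, hFB, hF⟩ := exists_sieveDensity_lt (lt_add_of_pos_right (freeDensity B) hδ)
  refine ⟨F, hFB, hF.le.trans (add_le_add_right (min_le_left _ _) _), ?_⟩
  filter_upwards [hMertens, eventually_logSum_freeZ_diff_le hB hFB,
    tendsto_log_natCast_atTop.eventually_gt_atTop 0] with x hx hsum hlog
  have hgap : sieveDensity F - freeDensity B ≤ ε / C := by
    linarith [min_le_right ε (ε / C)]
  have hgap0 : 0 ≤ sieveDensity F - freeDensity B :=
    sub_nonneg.2 (freeDensity_le_sieveDensity hB hFB)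
  rw [logWeight_eq_inv_log_mul_logSum, inv_mul_le_iff₀ hlog]
  calc logSum (freeZ F \ freeZ B) x
      ≤ eulerProd x * (sieveDensity F - freeDensity B) := hsum
    _ ≤ (C * Real.log x) * (ε / C) := by gcongr
    _ = Real.log x * ε := by field_simp

lemma HasLogDensity.inter_freeZ_of_forall_finset {C : Set ℤ} {c : ℝ} {B : Set ℕ} (hB : 0 ∉ B)
    (h : ∀ F : Finset ℕ, (F : Set ℕ) ⊆ B → HasLogDensity (C ∩ freeZ F) (c * sieveDensity F)) :
    HasLogDensity (C ∩ freeZ B) (c * freeDensity B) := by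
  refine .of_forall_approx fun ε hε ↦ ?_
  have hc : 0 < |c| + 1 := by positivity
  obtain ⟨F, hFB, hF, htail⟩ := exists_eventually_logWeight_freeZ_diff_le hB
    (lt_min hε (div_pos hε hc))
  refine ⟨C ∩ freeZ F, c * sieveDensity F, h F hFB, ?_, ?_⟩
  · have hgap : |sieveDensity F - freeDensity B| ≤ ε / (|c| + 1) := by
      rw [abs_of_nonneg (sub_nonneg.2 (freeDensity_le_sieveDensity hB hFB))]
      linarith [min_le_right ε (ε / (|c| + 1))]
    rw [← mul_sub, abs_mul]
    calc |c| * |sieveDensity F - freeDensity B| ≤ (|c| + 1) * (ε / (|c| + 1)) := by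
          gcongr
          exact le_add_of_nonneg_right zero_le_one
      _ = ε := mul_div_cancel₀ ε hc.ne'
  · filter_upwards [htail] with x hx
    exact (abs_logWeight_inter_freeZ_sub_le hFB C x).trans (hx.trans (min_le_left _ _))

lemma hasLogDensity_modEq_inter_freeZ {Q : ℕ} (hQ : Q ≠ 0) {B : Set ℕ} (hB : 0 ∉ B)
    (hcop : ∀ b ∈ B, Q.Coprime b) (a : ℤ) :
    HasLogDensity ({k | k ≡ a [ZMOD Q]} ∩ freeZ B) ((Q : ℝ)⁻¹ * freeDensity B) :=
  .inter_freeZ_of_forall_finset hB fun _ hF ↦ hasLogDensity_modEq_inter_freeZ_finset hQ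
    (fun h0 ↦ hB (hF h0)) (fun b hb ↦ hcop b (hF hb)) a

lemma hasLogDensity_modEq_inter_multiplesZ_of_coprime {Q : ℕ} (hQ : Q ≠ 0) {B : Set ℕ} (hB : 0 ∉ B)
    (hcop : ∀ b ∈ B, Q.Coprime b) (a : ℤ) :
    HasLogDensity ({k | k ≡ a [ZMOD Q]} ∩ multiplesZ B) ((Q : ℝ)⁻¹ * (1 - freeDensity B)) := by
  have h := (hasLogDensity_setOf_modEq hQ a).diff (hasLogDensity_modEq_inter_freeZ hQ hB hcop a)
    inter_subset_left
  rwa [sdiff_self_inter, freeZ, sdiff_compl, ← mul_one_sub] at h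

lemma hasLogDensity_freeZ {B : Set ℕ} (hB : 0 ∉ B) : HasLogDensity (freeZ B) (freeDensity B) := by
  simpa [Int.modEq_one] using
    hasLogDensity_modEq_inter_freeZ one_ne_zero hB (fun b _ ↦ b.coprime_one_left) 0

lemma hasLogDensity_multiplesZ {B : Set ℕ} (hB : 0 ∉ B) :
    HasLogDensity (multiplesZ B) (1 - freeDensity B) := by
  simpa [Int.modEq_one] using
    hasLogDensity_modEq_inter_multiplesZ_of_coprime one_ne_zero hB (fun b _ ↦ b.coprime_one_left) 0

lemma freeDensity_le_one {B : Set ℕ} (hB : 0 ∉ B) : freeDensity B ≤ 1 :=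
  sub_nonneg.1 (hasLogDensity_multiplesZ hB).nonneg

lemma freeDensity_empty : freeDensity ∅ = 1 := by
  have h := hasLogDensity_freeZ (notMem_empty 0)
  have huniv : freeZ ∅ = univ := eq_univ_of_forall fun _ ↦ mem_freeZ.2 fun _ hb ↦ hb.elim
  rw [huniv] at h
  exact tendsto_nhds_unique h hasLogDensity_univ

/-! ### A zero–one law for tails -/

lemma hasLogDensity_freeZ_inter_freeZ {B : Set ℕ} (hB : 0 ∉ B) {F : Finset ℕ} (hF : 0 ∉ F)
    (hcop : ∀ q ∈ F, ∀ b ∈ B, q.Coprime b) :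
    HasLogDensity (freeZ B ∩ freeZ F) (freeDensity B * sieveDensity F) := by
  refine .inter_freeZ fun s hs ↦ ?_
  have h := hasLogDensity_modEq_inter_freeZ
    (lcm_ne_zero_of_zero_notMem fun h0 ↦ hF (hs h0)) hB
    (fun b hb ↦ (coprime_lcm_right fun q hq ↦ (hcop q (hs hq) b hb).symm).symm) 0
  have hset : {k : ℤ | k ≡ 0 [ZMOD (s.lcm id : ℕ)]} = multiplesZ {s.lcm id} := by
    ext k
    rw [mem_multiplesZ_singleton, mem_ofPred_eq, Int.modEq_zero_iff_dvd]
  rwa [hset, inter_comm, mul_comm] at h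

lemma coprime_of_mem_Btilde {B : Set ℕ} {T q b : ℕ} (hq : ∀ p : ℕ, p.Prime → p ∣ q → p ≤ T)
    (hb : b ∈ Btilde B T) : q.Coprime b :=
  Nat.coprime_of_dvd fun p hp hpq hpb ↦ (hq p hp hpq).not_gt (hb.2 p hp hpb)

lemma zero_notMem_Btilde {B : Set ℕ} (hB : 0 ∉ B) (T : ℕ) : 0 ∉ Btilde B T :=
  fun h ↦ hB h.1

lemma Btilde_anti (B : Set ℕ) : Antitone (Btilde B) :=
  fun _ _ hT _ hb ↦ ⟨hb.1, fun p hp hpb ↦ hT.trans_lt (hb.2 p hp hpb)⟩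

lemma freeDensity_Btilde_le_mul_sieveDensity {B : Set ℕ} (hB : 0 ∉ B) {T : ℕ} {F : Finset ℕ}
    (hF : (F : Set ℕ) ⊆ Btilde B T) :
    ∃ T', freeDensity (Btilde B T) ≤ freeDensity (Btilde B T') * sieveDensity F := by
  have hF0 : 0 ∉ F := fun h0 ↦ hB (hF h0).1
  refine ⟨max T (F.sup id), le_of_tendsto_of_tendsto'
    (hasLogDensity_freeZ (zero_notMem_Btilde hB T))
    (hasLogDensity_freeZ_inter_freeZ (zero_notMem_Btilde hB _) hF0 fun q hq b hb ↦
      coprime_of_mem_Btilde (fun p _ hpq ↦ ?_) hb)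
    (logWeight_mono fun k hk ↦
      ⟨freeZ_anti (Btilde_anti B (le_max_left _ _)) hk, freeZ_anti hF hk⟩)⟩
  have hq0 : 0 < q := Nat.pos_of_ne_zero fun h0 ↦ hF0 (h0 ▸ hq)
  exact (Nat.le_of_dvd hq0 hpq).trans ((Finset.le_sup (f := id) hq).trans (le_max_right _ _))

lemma freeDensity_Btilde_eq_zero_of_forall_le {B : Set ℕ} (hB : 0 ∉ B) {θ : ℝ} (hθ : θ < 1)
    (h : ∀ T, freeDensity (Btilde B T) ≤ θ) (T : ℕ) : freeDensity (Btilde B T) = 0 := by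
  have hnonneg : 0 ≤ freeDensity (Btilde B T) :=
    (hasLogDensity_freeZ (zero_notMem_Btilde hB T)).nonneg
  have hle : freeDensity (Btilde B T) ≤ θ * freeDensity (Btilde B T) := by
    have : Nonempty {F : Finset ℕ // (F : Set ℕ) ⊆ Btilde B T} := ⟨∅, by simp⟩
    conv_rhs => rw [freeDensity, Real.mul_iInf_of_nonneg (hnonneg.trans (h T))]
    refine le_ciInf fun F ↦ ?_
    obtain ⟨T', hT'⟩ := freeDensity_Btilde_le_mul_sieveDensity hB F.2
    exact hT'.trans (mul_le_mul_of_nonneg_right (h T')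
      (sieveDensity_nonneg fun h0 ↦ hB (F.2 h0).1))
  have hgap : (1 - θ) * freeDensity (Btilde B T) ≤ 0 := by linarith
  exact le_antisymm (nonpos_of_mul_nonpos_right hgap (sub_pos.2 hθ)) hnonneg

/-! ### Taut sets -/

/-- The cofactors `a ≠ 1` of `c` in the elements `c * a` of `B`. The element `c` itself, if it lies
in `B`, is left out, so that `B` is taut only if large cofactors of `c` have few multiples. -/
def cofactors (B : Set ℕ) (c : ℕ) : Set ℕ := {a | a ≠ 1 ∧ c * a ∈ B}

lemma zero_notMem_cofactors {B : Set ℕ} (hB : 0 ∉ B) (c : ℕ) : 0 ∉ cofactors B c :=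
  fun h ↦ hB (by simpa using h.2)

lemma IsTaut.freeDensity_ne_zero {B : Set ℕ} (hB : 0 ∉ B) (htaut : IsTaut B) {c a₀ : ℕ}
    (ha₀ : c * a₀ ∈ B) {A : Set ℕ} (hA : ∀ a ∈ A, a ≠ a₀ ∧ c * a ∈ B) : freeDensity A ≠ 0 := by
  intro hzero
  have hc : c ≠ 0 := fun h0 ↦ hB (by simpa [h0] using ha₀)
  have hA0 : 0 ∉ A := fun h0 ↦ hB (by simpa using (hA 0 h0).2)
  have hfree : HasLogDensity ((fun k ↦ (c : ℤ) * k) '' freeZ A) 0 :=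
    (hzero ▸ hasLogDensity_freeZ hA0).image_mul_left hc
  have hcover (k : ℕ) (hk : (k : ℤ) ∈ multiplesZ B) : (k : ℤ) ∈ multiplesZ (B \ {c * a₀}) ∨
      ∃ _t ∈ ({()} : Finset Unit), (k : ℤ) ∈ (fun k ↦ (c : ℤ) * k) '' freeZ A := by
    obtain ⟨b, hbB, hbk⟩ := hk
    by_cases hb : b = c * a₀
    · obtain ⟨j, hj⟩ := hbk
      rw [hb, Nat.cast_mul, mul_assoc] at hj
      by_cases hja : (a₀ * j : ℤ) ∈ freeZ A
      · exact .inr ⟨(), Finset.mem_singleton_self _, _, hja, hj.symm⟩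
      · obtain ⟨a, haA, haj⟩ := not_not.1 hja
        refine .inl ⟨c * a, ⟨(hA a haA).2, fun h ↦ (hA a haA).1 ?_⟩, ?_⟩
        · exact Nat.eq_of_mul_eq_mul_left (Nat.pos_of_ne_zero hc) h
        · rw [hj, Nat.cast_mul]
          exact mul_dvd_mul_left _ haj
    · exact .inl ⟨b, ⟨hbB, hb⟩, hbk⟩
  have hle := (hasLogDensity_multiplesZ hB).sub_sum_le_logDensLow (fun _ _ ↦ hfree) hcover
  rw [Finset.sum_const_zero, sub_zero, ← (hasLogDensity_multiplesZ hB).logDensLow_eq] at hle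
  exact (htaut _ ha₀).not_ge hle

lemma notMem_Btilde_self {B : Set ℕ} {b : ℕ} (hb0 : b ≠ 0) (hb1 : b ≠ 1) : b ∉ Btilde B b :=
  fun h ↦ (Nat.minFac_le (Nat.pos_of_ne_zero hb0)).not_gt
    (h.2 _ (Nat.minFac_prime hb1) b.minFac_dvd)

lemma IsTaut.eventually_lt_freeDensity_Btilde_cofactors {B : Set ℕ} (hB : 0 ∉ B)
    (htaut : IsTaut B) (c : ℕ) {θ : ℝ} (hθ : θ < 1) :
    ∀ᶠ T in atTop, θ < freeDensity (Btilde (cofactors B c) T) := by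
  have h0 := zero_notMem_cofactors hB c
  have hmono : Monotone fun T ↦ freeDensity (Btilde (cofactors B c) T) := fun T T' hT ↦
    freeDensity_anti (zero_notMem_Btilde h0 T) (Btilde_anti _ hT)
  by_contra hle
  have hzero (T : ℕ) : freeDensity (Btilde (cofactors B c) T) = 0 := by
    refine freeDensity_Btilde_eq_zero_of_forall_le h0 hθ (fun T ↦ ?_) T
    by_contra! hT
    exact hle ((eventually_ge_atTop T).mono fun T' hT' ↦ hT.trans_le (hmono hT'))
  rcases (cofactors B c).eq_empty_or_nonempty with hempty | ⟨a₀, ha₀⟩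
  · have hBtilde : Btilde (cofactors B c) 0 = ∅ :=
      eq_empty_of_subset_empty (hempty ▸ fun _ ↦ And.left)
    simpa [hBtilde, freeDensity_empty] using hzero 0
  · refine htaut.freeDensity_ne_zero hB ha₀.2 (fun a ha ↦ ⟨?_, ha.1.2⟩) (hzero a₀)
    rintro rfl
    exact notMem_Btilde_self (fun h ↦ h0 (h ▸ ha₀)) ha₀.1 ha

lemma IsTaut.tendsto_freeDensity_Btilde_cofactors {B : Set ℕ} (hB : 0 ∉ B) (htaut : IsTaut B)
    (c : ℕ) : Tendsto (fun T ↦ freeDensity (Btilde (cofactors B c) T)) atTop (𝓝 1) :=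
  tendsto_order.2 ⟨fun _ hθ ↦ htaut.eventually_lt_freeDensity_Btilde_cofactors hB c hθ,
    fun _ hθ ↦ Eventually.of_forall fun T ↦
      (freeDensity_le_one (zero_notMem_Btilde (zero_notMem_cofactors hB c) T)).trans_lt hθ⟩

lemma IsTaut.eventually_sum_one_sub_freeDensity_lt {B : Set ℕ} (hB : 0 ∉ B) (htaut : IsTaut B)
    {ι : Type*} (s : Finset ι) (c : ι → ℕ) :
    ∀ᶠ T in atTop, ∑ t ∈ s, (1 - freeDensity (Btilde (cofactors B (c t)) T)) < 1 := by
  have hlim := tendsto_finsetSum s fun t _ ↦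
    (htaut.tendsto_freeDensity_Btilde_cofactors hB (c t)).const_sub 1
  rw [sub_self, Finset.sum_const_zero] at hlim
  exact hlim.eventually_lt_const one_pos

/-! ### The residue class carrying the block -/

/-- A modulus `L` such that `k ≡ r [ZMOD L]` makes `k + i` a multiple of `r + i` for `i ∈ I`, while
for `p ≤ n` the power of `p` in `L` is too large to divide any `r + i` with `1 ≤ i ≤ n`. -/
def blockModulus (n r : ℕ) (I : Set ℕ) : ℕ :=
  n.factorial ^ (r + n + 1) * ∏ i ∈ Finset.Icc 1 n with i ∈ I, (r + i)

section BlockModulus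

variable {n r : ℕ} {I : Set ℕ} {i p b : ℕ}

lemma blockModulus_ne_zero : blockModulus n r I ≠ 0 := by
  refine mul_ne_zero (pow_ne_zero _ n.factorial_ne_zero) (Finset.prod_ne_zero_iff.2 fun i hi ↦ ?_)
  have := (Finset.mem_Icc.1 (Finset.mem_filter.1 hi).1).1
  lia

lemma add_dvd_blockModulus (hi : i ∈ Finset.Icc 1 n) (hiI : i ∈ I) : r + i ∣ blockModulus n r I :=
  (Finset.dvd_prod_of_mem (r + ·) (Finset.mem_filter.2 ⟨hi, hiI⟩)).trans (dvd_mul_left _ _)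

lemma pow_dvd_blockModulus (hp : p.Prime) (hpn : p ≤ n) : p ^ (r + n + 1) ∣ blockModulus n r I :=
  (pow_dvd_pow_of_dvd (hp.dvd_factorial.2 hpn) _).trans (dvd_mul_right _ _)

lemma le_of_prime_dvd_blockModulus (hp : p.Prime) (hpL : p ∣ blockModulus n r I)
    (hi : i ∈ Finset.Icc 1 n) (hiI : i ∉ I) (hpi : p ∣ r + i) : p ≤ n := by
  rcases hp.dvd_mul.1 hpL with hfact | hprod
  · exact hp.dvd_factorial.1 (hp.dvd_of_dvd_pow hfact)
  · obtain ⟨j, hj, hpj⟩ := (hp.prime.dvd_finsetProd_iff _).1 hprod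
    obtain ⟨hjn, hjI⟩ := Finset.mem_filter.1 hj
    have hij : (i : ℤ) - j ≠ 0 := by
      rw [sub_ne_zero, Ne, Nat.cast_inj]
      exact fun h ↦ hiI (h ▸ hjI)
    have hdvd : (p : ℤ) ∣ i - j := by
      have := dvd_sub (Int.natCast_dvd_natCast.2 hpi) (Int.natCast_dvd_natCast.2 hpj)
      rwa [Nat.cast_add, Nat.cast_add, add_sub_add_left_eq_sub] at this
    have hle := Int.le_of_dvd (abs_pos.2 hij) ((dvd_abs _ _).2 hdvd)
    rw [Finset.mem_Icc] at hi hjn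
    have habs : |(i : ℤ) - j| ≤ n := abs_le.2 ⟨by lia, by lia⟩
    exact_mod_cast hle.trans habs

lemma pow_dvd_gcd_of_dvd_div_gcd {L m : ℕ} (hpL : p ^ m ∣ L) (hpb : p ∣ b / b.gcd L) :
    p ^ m ∣ b.gcd L := by
  induction m with
  | zero => simp
  | succ m ih =>
    refine Nat.dvd_gcd ?_ hpL
    rw [pow_succ, ← Nat.mul_div_cancel' (b.gcd_dvd_left L)]
    exact mul_dvd_mul (ih ((pow_dvd_pow p m.le_succ).trans hpL)) hpb

lemma not_dvd_blockModulus_of_dvd_div_gcd (hi : i ∈ Finset.Icc 1 n) (hiI : i ∉ I)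
    (hb : b.gcd (blockModulus n r I) ∣ r + i) (hp : p.Prime)
    (hpb : p ∣ b / b.gcd (blockModulus n r I)) : ¬ p ∣ blockModulus n r I := by
  intro hpL
  have hpi : p ∣ r + i :=
    (pow_one p ▸ pow_dvd_gcd_of_dvd_div_gcd ((pow_one p).symm ▸ hpL) hpb).trans hb
  have hpn := le_of_prime_dvd_blockModulus hp hpL hi hiI hpi
  have hpow := (pow_dvd_gcd_of_dvd_div_gcd (pow_dvd_blockModulus hp hpn) hpb).trans hb
  rw [Finset.mem_Icc] at hi
  have hle := Nat.le_of_dvd (by lia) hpow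
  have hlt := Nat.lt_pow_self hp.one_lt (n := r + n + 1)
  lia

lemma div_gcd_blockModulus_ne_one {B : Set ℕ} (hi : i ∈ Finset.Icc 1 n) (hiI : i ∉ I)
    (hsmooth : ∀ b ∈ Bsmooth B n, ¬ b ∣ r + i) (hbB : b ∈ B)
    (hb : b.gcd (blockModulus n r I) ∣ r + i) : b / b.gcd (blockModulus n r I) ≠ 1 := by
  intro hone
  have hgcd := Nat.mul_div_cancel' (b.gcd_dvd_left (blockModulus n r I))
  rw [hone, mul_one] at hgcd
  rw [hgcd] at hb
  have hbL := Nat.gcd_eq_left_iff_dvd.1 hgcd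
  exact hsmooth b ⟨hbB, fun p hp hpb ↦
    le_of_prime_dvd_blockModulus hp (hpb.trans hbL) hi hiI (hpb.trans hb)⟩ hb

lemma div_gcd_blockModulus_mem_Btilde_cofactors {B : Set ℕ} {T : ℕ} {k : ℤ}
    (hkr : k ≡ r [ZMOD blockModulus n r I])
    (hkp : ∀ p : ℕ, p.Prime → p ≤ T → ¬ p ∣ blockModulus n r I → (p : ℤ) ∣ k)
    (hi : i ∈ Finset.Icc 1 n) (hiI : i ∉ I) (hsmooth : ∀ b ∈ Bsmooth B n, ¬ b ∣ r + i)
    (hbB : b ∈ B) (hbk : (b : ℤ) ∣ k + i) :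
    b / b.gcd (blockModulus n r I) ∈ Btilde (cofactors B (b.gcd (blockModulus n r I))) T := by
  set L := blockModulus n r I
  have hgL : ((b.gcd L : ℕ) : ℤ) ∣ L := Int.natCast_dvd_natCast.2 (b.gcd_dvd_right L)
  have hgk : ((b.gcd L : ℕ) : ℤ) ∣ k + i := (Int.natCast_dvd_natCast.2 (b.gcd_dvd_left L)).trans hbk
  have hg : b.gcd L ∣ r + i := by
    rw [← Int.natCast_dvd_natCast, Nat.cast_add]
    exact ((hkr.add_right i).of_dvd hgL).dvd_iff.1 hgk
  have hdiv := Nat.mul_div_cancel' (b.gcd_dvd_left L)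
  refine ⟨⟨div_gcd_blockModulus_ne_one hi hiI hsmooth hbB hg, hdiv.symm ▸ hbB⟩,
    fun p hp hpb ↦ ?_⟩
  have hpL : ¬ p ∣ L := not_dvd_blockModulus_of_dvd_div_gcd hi hiI hg hp hpb
  have hnp : n < p := by
    by_contra! hpn
    exact hpL ((dvd_pow_self p (by lia)).trans (pow_dvd_blockModulus (r := r) hp hpn))
  by_contra! hpT
  have hpki : (p : ℤ) ∣ k + i :=
    (Int.natCast_dvd_natCast.2 (hpb.trans (Nat.div_dvd_of_dvd (b.gcd_dvd_left L)))).trans hbk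
  have hpi : p ∣ i := Int.natCast_dvd_natCast.1 ((dvd_add_right (hkp p hp hpT hpL)).1 hpki)
  rw [Finset.mem_Icc] at hi
  exact hnp.not_ge ((Nat.le_of_dvd hi.1 hpi).trans hi.2)

-- A `b ∈ B` dividing `k + i` splits as `b = c * a` with `c = gcd b L`, so an unwanted multiple in
-- the block at `k` is caused by a cofactor `a` of one of the finitely many divisors `c` of `L`.
lemma block_or_exists_mem_multiplesZ_cofactors {B : Set ℕ} {T : ℕ} {k : ℤ}
    (hkr : k ≡ r [ZMOD blockModulus n r I])
    (hkp : ∀ p : ℕ, p.Prime → p ≤ T → ¬ p ∣ blockModulus n r I → (p : ℤ) ∣ k)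
    (hI : ∀ i ∈ Finset.Icc 1 n, i ∈ I → (r + i : ℤ) ∈ multiplesZ B)
    (hsmooth : ∀ i ∈ Finset.Icc 1 n, i ∉ I → (r + i : ℤ) ∉ multiplesZ (Bsmooth B n)) :
    (∀ i ∈ Finset.Icc 1 n, (k + i : ℤ) ∈ multiplesZ B ↔ i ∈ I) ∨
      ∃ t ∈ Finset.Icc 1 n ×ˢ (blockModulus n r I).divisors,
        (k + t.1 : ℤ) ∈ multiplesZ (Btilde (cofactors B t.2) T) := by
  by_cases htail : ∃ i ∈ Finset.Icc 1 n, i ∉ I ∧ (k + i : ℤ) ∈ multiplesZ B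
  · obtain ⟨i, hi, hiI, b, hbB, hbk⟩ := htail
    have hnot (b : ℕ) (hb : b ∈ Bsmooth B n) : ¬ b ∣ r + i := fun hbi ↦
      hsmooth i hi hiI ⟨b, hb, by exact_mod_cast hbi⟩
    refine .inr ⟨(i, b.gcd (blockModulus n r I)), Finset.mem_product.2 ⟨hi, Nat.mem_divisors.2
      ⟨b.gcd_dvd_right _, blockModulus_ne_zero⟩⟩, b / b.gcd (blockModulus n r I),
      div_gcd_blockModulus_mem_Btilde_cofactors hkr hkp hi hiI hnot hbB hbk, ?_⟩
    exact (Int.natCast_dvd_natCast.2 (Nat.div_dvd_of_dvd (b.gcd_dvd_left _))).trans hbk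
  · push Not at htail
    refine .inl fun i hi ↦ ⟨fun hki ↦ not_not.1 fun hiI ↦ htail i hi hiI hki, fun hiI ↦ ?_⟩
    obtain ⟨b, hbB, hbi⟩ := hI i hi hiI
    have hbL : (b : ℤ) ∣ blockModulus n r I :=
      hbi.trans (by exact_mod_cast add_dvd_blockModulus hi hiI)
    exact ⟨b, hbB, ((hkr.add_right i).of_dvd hbL).dvd_iff.2 hbi⟩

end BlockModulus

lemma exists_residueClass_forall_prime_dvd {L T : ℕ} (hL : L ≠ 0) (hLT : L ≤ T) (r : ℤ) :
    ∃ Q : ℕ, Q ≠ 0 ∧ (∀ p : ℕ, p.Prime → p ∣ Q → p ≤ T) ∧ ∃ a : ℤ, ∀ k : ℤ, k ≡ a [ZMOD Q] →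
      k ≡ r [ZMOD L] ∧ ∀ p : ℕ, p.Prime → p ≤ T → ¬ p ∣ L → (p : ℤ) ∣ k := by
  set R : ℕ := ∏ p ∈ Nat.primesLE T with ¬ p ∣ L, p
  have hR {p : ℕ} : p ∈ {p ∈ Nat.primesLE T | ¬ p ∣ L} ↔ (p ≤ T ∧ p.Prime) ∧ ¬ p ∣ L := by
    rw [Finset.mem_filter, Nat.mem_primesLE]
  have hcop : L.Coprime R := Nat.Coprime.prod_right fun p hp ↦
    ((hR.1 hp).1.2.coprime_iff_not_dvd.2 (hR.1 hp).2).symm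
  obtain ⟨a, har, hRa⟩ := exists_modEq_and_dvd hcop r
  refine ⟨L * R, mul_ne_zero hL (Finset.prod_ne_zero_iff.2 fun p hp ↦ (hR.1 hp).1.2.ne_zero),
    fun p hp hpQ ↦ ?_, a, fun k hk ↦ ?_⟩
  · rcases hp.dvd_mul.1 hpQ with hpL | hpR
    · exact (Nat.le_of_dvd (Nat.pos_of_ne_zero hL) hpL).trans hLT
    · obtain ⟨q, hq, hpq⟩ := (hp.prime.dvd_finsetProd_iff _).1 hpR
      exact (Nat.le_of_dvd (hR.1 hq).1.2.pos hpq).trans (hR.1 hq).1.1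
  · rw [Nat.cast_mul] at hk
    refine ⟨hk.of_mul_right R |>.trans har, fun p hp hpT hpL ↦ ?_⟩
    have hpR : (p : ℤ) ∣ R :=
      Int.natCast_dvd_natCast.2 (Finset.dvd_prod_of_mem _ (hR.2 ⟨⟨hpT, hp⟩, hpL⟩))
    exact hpR.trans ((hk.of_mul_left L).dvd_iff.2 hRa)

/-- If `B` is taut, `B^(n) ⊆ A ⊆ B` and the block of `M_A` on `{r+1,…,r+n}` is `r + I`,
then the set of `k ∈ ℕ` at which `M_B` shows the block `k + I` on `{k+1,…,k+n}` has
strictly positive lower logarithmic density. -/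
theorem block_positive_density (B : Set ℕ) (hB0 : 0 ∉ B) (hprim : Primitive B)
    (htaut : IsTaut B) (n : ℕ) (hn : 0 < n) (A : Set ℕ) (hBnA : Bsmooth B n ⊆ A)
    (hAB : A ⊆ B) (r : ℕ) (hr : 0 < r) (I : Set ℕ) (hI : ∀ i ∈ I, i ∈ Finset.Icc 1 n)
    (hblock : ∀ i ∈ Finset.Icc 1 n, (((r : ℤ) + (i : ℤ)) ∈ multiplesZ A ↔ i ∈ I)) :
    0 < logDensLow {k : ℤ | 0 ≤ k ∧
        ∀ i ∈ Finset.Icc 1 n, ((k + (i : ℤ)) ∈ multiplesZ B ↔ i ∈ I)} := by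
  obtain ⟨T, hT, hLT⟩ := ((htaut.eventually_sum_one_sub_freeDensity_lt hB0
    (Finset.Icc 1 n ×ˢ (blockModulus n r I).divisors) Prod.snd).and
      (eventually_ge_atTop (blockModulus n r I))).exists
  obtain ⟨Q, hQ, hQT, a, ha⟩ := exists_residueClass_forall_prime_dvd blockModulus_ne_zero hLT r
  have htail (t : ℕ × ℕ) : HasLogDensity
      {k | k + (t.1 : ℤ) ∈ {m | m ≡ a + t.1 [ZMOD Q]} ∩ multiplesZ (Btilde (cofactors B t.2) T)}
      ((Q : ℝ)⁻¹ * (1 - freeDensity (Btilde (cofactors B t.2) T))) :=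
    (hasLogDensity_modEq_inter_multiplesZ_of_coprime hQ
      (zero_notMem_Btilde (zero_notMem_cofactors hB0 _) T)
      (fun _ hb ↦ coprime_of_mem_Btilde hQT hb) _).shift t.1
  refine lt_of_lt_of_le ?_ ((hasLogDensity_setOf_modEq hQ a).sub_sum_le_logDensLow
    (s := Finset.Icc 1 n ×ˢ (blockModulus n r I).divisors) (fun t _ ↦ htail t) fun k hk ↦ ?_)
  · rw [← Finset.mul_sum, ← mul_one_sub]
    exact mul_pos (inv_pos.2 (Nat.cast_pos.2 (Nat.pos_of_ne_zero hQ))) (sub_pos.2 hT)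
  · obtain ⟨hkr, hkp⟩ := ha k hk
    refine (block_or_exists_mem_multiplesZ_cofactors hkr hkp
      (fun i hi hiI ↦ ?_) fun i hi hiI ↦ ?_).imp (fun h ↦ ⟨k.cast_nonneg, h⟩)
        fun ⟨t, ht, htk⟩ ↦ ⟨t, ht, hk.add_right _, htk⟩
    · obtain ⟨b, hbA, hbi⟩ := (hblock i hi).2 hiI
      exact ⟨b, hAB hbA, hbi⟩
    · exact fun ⟨b, hb, hbi⟩ ↦ hiI ((hblock i hi).1 ⟨b, hBnA hb, hbi⟩)
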